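/- Let G be a k-connected graph (k ≥ 1) with n ≥ 9 vertices and e edges, minimum degree δ, and maximum degree Δ. If the first Zagreb index satisfies M₁(G) ≥ (n − k − 2)Δ² + (e(δ + n − k − 2))² / (4δ(n − k − 2)(k + 2)), then G is traceable or G is the complete bipartite graph K_{k, k+2}. -/

import Mathlib

open Finset

/-- `G` is `k`-connected: more than `k` vertices, and deleting fewer than `k`
vertices leaves a connected graph. -/
def KConnected {V : Type*} [Fintype V] (k : ℕ) (G : SimpleGraph V) : Prop :=
  k < Fintype.card V ∧
    ∀ S : Finset V, S.card < k → (G.induce ((↑S : Set V)ᶜ)).Connected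

/-- `G` is traceable: it has a Hamiltonian path. -/
def IsTraceable {V : Type*} [DecidableEq V] (G : SimpleGraph V) : Prop :=
  ∃ (u v : V) (p : G.Walk u v), p.IsHamiltonian

/-!
If `G` is `k`-connected and not traceable, take a longest path and a component `C` of its
complement. The head of the path, the path successors of the vertices attached to `C`, and a vertex
of `C` form an independent set with at least `k + 2` vertices; let `I` consist of `k + 2` of them
and put `m = n - k - 2`.

The vertices outside `I` contribute at most `m Δ²` to the Zagreb index. Those in `I` have degrees
in `[δ, m]` with sum at most `e`, so the Pólya–Szegő inequality bounds their contribution by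
`(e (δ + m))² / (4 δ m (k + 2))`. The hypothesis therefore forces equality throughout: every edge
meets `I`, all degrees outside `I` are `Δ`, all degrees in `I` are `δ` or `m`, and
`(δ + m) Δ = 2 (k + 2) δ`. A connected graph that is not traceable has `Δ ≥ 3`, and with
`k ≤ δ` and `Δ ≤ k + 2` this leaves only `δ = m`. So `G` is complete bipartite with parts of sizes
`k + 2` and `m ∈ {k, k + 1, k + 2}`, which is traceable unless `m = k`.
-/

theorem isTraceable_of_isChain {V : Type*} [DecidableEq V] [Nonempty V] {G : SimpleGraph V}
    {l : List V} (hchain : l.IsChain G.Adj) (hnodup : l.Nodup) (hmem : ∀ v, v ∈ l) :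
    IsTraceable G := by
  have hne : l ≠ [] := List.ne_nil_of_mem (hmem (Classical.arbitrary V))
  refine ⟨_, _, .ofSupport l hne hchain, fun v => ?_⟩
  rw [SimpleGraph.Walk.support_ofSupport]
  exact List.count_eq_one_of_mem hnodup (hmem v)

/-- `x` starts a segment of `l` when `l` is cut after each of its entries lying in `S`: either `x`
is the head of `l`, or the entry just before `x` is in `S`. -/
def IsSegmentStart {α : Type*} (l : List α) (S : Finset α) (x : α) : Prop :=
  ∃ A B, l = A ++ x :: B ∧ ∀ y ∈ A.getLast?, y ∈ S

theorem IsSegmentStart.mem {α : Type*} {l : List α} {S : Finset α} {x : α}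
    (hx : IsSegmentStart l S x) : x ∈ l := by
  obtain ⟨A, B, rfl, -⟩ := hx
  simp

theorem append_cons_eq_append_cons {α : Type*} {A A' B B' : List α} {x y : α}
    (h : A ++ x :: B = A' ++ y :: B') (hne : x ≠ y) :
    (∃ M, A' = A ++ x :: M ∧ B = M ++ y :: B') ∨ ∃ M, A = A' ++ y :: M ∧ B' = M ++ x :: B := by
  rcases List.append_eq_append_iff.1 h with ⟨M, hM, hM'⟩ | ⟨M, hM, hM'⟩ <;> cases M <;> simp_all

theorem exists_card_eq_add_one_forall_isSegmentStart {α : Type*} {l : List α}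
    (hl : l.Nodup) (hne : l ≠ []) {S : Finset α} (hS : ∀ x ∈ S, x ∈ l)
    (hlast : l.getLast hne ∉ S) :
    ∃ T : Finset α, #T = #S + 1 ∧ ∀ x ∈ T, IsSegmentStart l S x := by
  classical
  -- `l.formPerm` moves each entry to the next one, and the last entry to the head.
  refine ⟨(insert (l.getLast hne) S).image l.formPerm, ?_, ?_⟩
  · rw [card_image_of_injective _ l.formPerm.injective, card_insert_of_notMem hlast]
  rw [forall_mem_image, forall_mem_insert]
  constructor
  · obtain ⟨a, t, rfl⟩ := List.exists_cons_of_ne_nil hne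
    exact ⟨[], t, by rw [List.formPerm_apply_getLast, List.nil_append], by simp⟩
  intro x hx
  obtain ⟨i, hi, rfl⟩ := List.getElem_of_mem (hS x hx)
  have hi' : i + 1 < l.length := by
    by_contra! hle
    obtain rfl : i = l.length - 1 := by omega
    exact hlast (l.getLast_eq_getElem hne ▸ hx)
  rw [List.formPerm_apply_lt_getElem l hl i hi']
  refine ⟨l.take (i + 1), l.drop (i + 2), ?_, ?_⟩
  · rw [← List.drop_eq_getElem_cons hi', List.take_append_drop]
  · simpa [List.getLast?_take, List.getElem?_eq_getElem hi] using hx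

section VertexBoundary

variable {V : Type*} [Fintype V] {G : SimpleGraph V} {k : ℕ}

open Classical in
/-- The vertices outside `C` having a neighbour in `C`. -/
noncomputable def vertexBoundary (G : SimpleGraph V) (C : Set V) : Finset V :=
  {x | x ∉ C ∧ ∃ a ∈ C, G.Adj a x}

theorem mem_vertexBoundary {C : Set V} {x : V} :
    x ∈ vertexBoundary G C ↔ x ∉ C ∧ ∃ a ∈ C, G.Adj a x := by
  simp [vertexBoundary]

theorem vertexBoundary_singleton [DecidableRel G.Adj] (v : V) :
    vertexBoundary G {v} = G.neighborFinset v := by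
  ext x
  simpa [mem_vertexBoundary] using fun h : G.Adj v x => h.ne'

theorem exists_mem_forall_adj {C : Set V} (hC : C.Nonempty) {o : Option V}
    (ho : ∀ x ∈ o, x ∈ vertexBoundary G C) : ∃ a ∈ C, ∀ x ∈ o, G.Adj a x := by
  cases o with
  | none => exact ⟨_, hC.some_mem, by simp⟩
  | some x => simpa using (mem_vertexBoundary.1 (ho x rfl)).2

theorem KConnected.le_card_vertexBoundary (hG : KConnected k G) {C : Set V} (hC : C.Nonempty)
    {w : V} (hwC : w ∉ C) (hw : w ∉ vertexBoundary G C) : k ≤ #(vertexBoundary G C) := by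
  by_contra! hlt
  obtain ⟨c, hc⟩ := hC
  have hc' : c ∉ vertexBoundary G C := fun h => (mem_vertexBoundary.1 h).1 hc
  obtain ⟨p⟩ := (hG.2 _ hlt).preconnected ⟨c, by simpa using hc'⟩ ⟨w, by simpa using hw⟩
  obtain ⟨d, -, hfst, hsnd⟩ := p.exists_boundary_dart (Subtype.val ⁻¹' C) hc hwC
  exact d.snd.2 (mem_coe.2 (mem_vertexBoundary.2 ⟨hsnd, d.fst, hfst, d.adj⟩))

theorem KConnected.le_degree [DecidableRel G.Adj] (hG : KConnected k G) (v : V) :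
    k ≤ G.degree v := by
  classical
  by_contra! hlt
  have hcard : #(insert v (G.neighborFinset v)) < Fintype.card V := by
    have := card_insert_le v (G.neighborFinset v)
    have := hG.1
    rw [G.card_neighborFinset_eq_degree] at *
    omega
  obtain ⟨w, -, hw⟩ := exists_mem_notMem_of_card_lt_card (card_univ (α := V) ▸ hcard)
  rw [mem_insert, not_or, ← vertexBoundary_singleton] at hw
  have := hG.le_card_vertexBoundary (Set.singleton_nonempty v) hw.1 hw.2
  rw [vertexBoundary_singleton, G.card_neighborFinset_eq_degree] at this
  omega

theorem KConnected.connected (hG : KConnected k G) (hk : 1 ≤ k) : G.Connected := by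
  have h := hG.2 ∅ (by rwa [card_empty])
  rw [coe_empty, Set.compl_empty] at h
  exact G.induceUnivIso.connected_iff.1 h

end VertexBoundary

/-- A longest path of `G`, given by the list of its vertices. -/
structure IsLongestPath {V : Type*} (G : SimpleGraph V) (l : List V) : Prop where
  isChain : l.IsChain G.Adj
  nodup : l.Nodup
  length_le : ∀ l' : List V, l'.IsChain G.Adj → l'.Nodup → l'.length ≤ l.length

theorem exists_isLongestPath {V : Type*} [Finite V] (G : SimpleGraph V) :
    ∃ l, IsLongestPath G l := by
  classical
  have := Fintype.ofFinite V
  let P : ℕ → Prop := fun m => ∃ l : List V, l.IsChain G.Adj ∧ l.Nodup ∧ l.length = m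
  obtain ⟨l, hchain, hnodup, hlength⟩ :=
    Nat.findGreatest_spec (P := P) (Nat.zero_le (Fintype.card V)) ⟨[], by simp⟩
  refine ⟨l, hchain, hnodup, fun l' hchain' hnodup' => hlength ▸ ?_⟩
  exact Nat.le_findGreatest hnodup'.length_le_card ⟨l', hchain', hnodup', rfl⟩

theorem exists_isPath_of_mem_componentCompl {V : Type*} {G : SimpleGraph V} {K : Set V}
    (C : G.ComponentCompl K) {a b : V} (ha : a ∈ C) (hb : b ∈ C) :
    ∃ p : G.Walk a b, p.IsPath ∧ ∀ x ∈ p.support, x ∉ K := by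
  obtain ⟨haK, rfl⟩ := ha
  obtain ⟨hbK, hab⟩ := hb
  obtain ⟨p, hp⟩ := (SimpleGraph.ConnectedComponent.exact hab.symm).exists_isPath
  let f : G.induce Kᶜ →g G := ⟨Subtype.val, id⟩
  refine ⟨p.map f, hp.map Subtype.val_injective, fun x hx => ?_⟩
  rw [SimpleGraph.Walk.support_map] at hx
  obtain ⟨y, -, rfl⟩ := List.mem_map.1 hx
  exact y.2

namespace IsLongestPath

variable {V : Type*} {G : SimpleGraph V} {l : List V}

theorem ne_nil (hl : IsLongestPath G l) [Nonempty V] : l ≠ [] := by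
  rintro rfl
  simpa using hl.length_le [Classical.arbitrary V] (by simp) (by simp)

theorem exists_notMem [DecidableEq V] [Nonempty V] (hl : IsLongestPath G l)
    (hnt : ¬ IsTraceable G) : ∃ c, c ∉ l := by
  by_contra! hmem
  exact hnt (isTraceable_of_isChain hl.isChain hl.nodup hmem)

variable [Fintype V]

theorem mem_of_mem_vertexBoundary {C : G.ComponentCompl {x | x ∈ l}} {x : V}
    (hx : x ∈ vertexBoundary G C) : x ∈ l := by
  obtain ⟨hxC, a, ha, hadj⟩ := mem_vertexBoundary.1 hx
  by_contra hxl
  exact hxC (C.mem_of_adj a x ha hxl hadj)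

/-- If a longest path could be cut and rearranged into two paths that can be joined through `C`,
the detour through `C` would make it longer. -/
theorem not_splice (hl : IsLongestPath G l) (C : G.ComponentCompl {x | x ∈ l}) {A D : List V}
    (hperm : (A ++ D).Perm l) (hA : A.IsChain G.Adj) (hD : D.IsChain G.Adj)
    (hAC : ∀ x ∈ A.getLast?, x ∈ vertexBoundary G C)
    (hDC : ∀ x ∈ D.head?, x ∈ vertexBoundary G C) : False := by
  obtain ⟨a, ha, haA⟩ := exists_mem_forall_adj C.nonempty hAC
  obtain ⟨d, hd, hdD⟩ := exists_mem_forall_adj C.nonempty hDC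
  obtain ⟨p, hp, hpl⟩ := exists_isPath_of_mem_componentCompl C ha hd
  have hchain : (A ++ (p.support ++ D)).IsChain G.Adj := by
    have hhead : (p.support ++ D).head? = some a := by
      rw [List.head?_append_of_ne_nil _ p.support_ne_nil,
        List.head?_eq_some_head p.support_ne_nil, p.head_support]
    have hlast : p.support.getLast? = some d := by
      rw [List.getLast?_eq_some_getLast p.support_ne_nil, p.getLast_support]
    refine List.isChain_append.2 ⟨hA, List.isChain_append.2 ⟨p.isChain_adj_support, hD, ?_⟩, ?_⟩
    · simpa [hlast] using hdD
    · simpa [hhead] using fun x hx => (haA x hx).symm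
  have hperm' : (A ++ (p.support ++ D)).Perm (p.support ++ l) :=
    List.perm_append_comm_assoc _ _ _ |>.trans (hperm.append_left _)
  have hnodup : (A ++ (p.support ++ D)).Nodup := by
    rw [hperm'.nodup_iff]
    exact hp.support_nodup.append hl.nodup hpl
  have hle := hl.length_le _ hchain hnodup
  rw [hperm'.length_eq, List.length_append] at hle
  have := List.length_pos_iff.2 p.support_ne_nil
  omega

theorem notMem_vertexBoundary_of_isSegmentStart (hl : IsLongestPath G l)
    (C : G.ComponentCompl {x | x ∈ l}) {x : V} (hx : IsSegmentStart l (vertexBoundary G C) x) :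
    x ∉ vertexBoundary G C := by
  obtain ⟨A, B, rfl, hA⟩ := hx
  intro hxC
  exact hl.not_splice C (.refl _) hl.isChain.left_of_append hl.isChain.right_of_append hA
    (by simpa using hxC)

theorem getLast_notMem_vertexBoundary (hl : IsLongestPath G l) (C : G.ComponentCompl {x | x ∈ l})
    (hne : l ≠ []) : l.getLast hne ∉ vertexBoundary G C := by
  intro hlast
  refine hl.not_splice C (A := l) (D := []) (by simp) hl.isChain (by simp) ?_ (by simp)
  simpa [List.getLast?_eq_some_getLast hne] using hlast

theorem exists_eq_append_of_mem_vertexBoundary (hl : IsLongestPath G l)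
    (C : G.ComponentCompl {x | x ∈ l}) {x : V} (hx : x ∈ vertexBoundary G C) :
    ∃ A u v B, l = A ++ u :: x :: v :: B := by
  obtain ⟨A, B, hAB⟩ := List.append_of_mem (mem_of_mem_vertexBoundary hx)
  rcases A.eq_nil_or_concat' with rfl | ⟨A, u, rfl⟩
  · exact (hl.notMem_vertexBoundary_of_isSegmentStart C ⟨[], B, hAB, by simp⟩ hx).elim
  rcases B with _ | ⟨v, B⟩
  · exact (hl.getLast_notMem_vertexBoundary C (by simp [hAB]) (by simpa [hAB] using hx)).elim
  · exact ⟨A, u, v, B, by simp [hAB]⟩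

/-- Reversing the stretch from `x` up to `y` brings `x` next to the part of `l` starting at `y`,
and frees two cut ends that `C` can join. -/
theorem not_adj_of_segmentStarts (hl : IsLongestPath G l) (C : G.ComponentCompl {x | x ∈ l})
    {A B D : List V} {x y : V} (hlist : l = A ++ (x :: B) ++ y :: D)
    (hA : ∀ z ∈ A.getLast?, z ∈ vertexBoundary G C)
    (hB : ∀ z ∈ (x :: B).getLast?, z ∈ vertexBoundary G C) : ¬ G.Adj x y := by
  intro hxy
  have hchain := hl.isChain
  rw [hlist] at hchain
  refine hl.not_splice C (A := A) (D := (x :: B).reverse ++ y :: D) ?_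
    hchain.left_of_append.left_of_append ?_ hA ?_
  · rw [hlist, List.append_assoc]
    exact ((List.reverse_perm _).append_right _).append_left _
  · refine List.isChain_append.2 ⟨?_, hchain.right_of_append, by simpa using hxy⟩
    rw [List.isChain_reverse]
    exact hchain.left_of_append.right_of_append.imp fun _ _ h => h.symm
  · rwa [List.head?_append_of_ne_nil _ (by simp), List.head?_reverse]

theorem isIndepSet_segmentStarts (hl : IsLongestPath G l) (C : G.ComponentCompl {x | x ∈ l}) :
    G.IsIndepSet {x | IsSegmentStart l (vertexBoundary G C) x} := by
  rintro x ⟨A, B, hAB, hA⟩ y ⟨A', B', hAB', hA'⟩ hne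
  rcases append_cons_eq_append_cons (hAB.symm.trans hAB') hne with ⟨M, rfl, rfl⟩ | ⟨M, rfl, rfl⟩
  · refine hl.not_adj_of_segmentStarts C hAB' hA ?_
    rwa [List.getLast?_append_cons] at hA'
  · refine fun h => hl.not_adj_of_segmentStarts C hAB hA' ?_ h.symm
    rwa [List.getLast?_append_cons] at hA

theorem isIndepSet_insert (hl : IsLongestPath G l) (C : G.ComponentCompl {x | x ∈ l})
    {c : V} (hc : c ∈ C) :
    G.IsIndepSet (insert c {x | IsSegmentStart l (vertexBoundary G C) x}) := by
  refine (hl.isIndepSet_segmentStarts C).insert fun x hx _ => ?_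
  have hnadj : ¬ G.Adj c x := fun hadj =>
    hl.notMem_vertexBoundary_of_isSegmentStart C hx
      (mem_vertexBoundary.2 ⟨fun hxC => C.notMem_of_mem hxC hx.mem, c, hc, hadj⟩)
  exact ⟨hnadj, fun h => hnadj h.symm⟩

end IsLongestPath

namespace KConnected

theorem exists_isIndepSet_of_not_isTraceable {V : Type*} [Fintype V] [DecidableEq V]
    {G : SimpleGraph V} {k : ℕ} (hG : KConnected k G) (hnt : ¬ IsTraceable G) :
    ∃ I : Finset V, #I = k + 2 ∧ G.IsIndepSet I := by
  have : Nonempty V := Fintype.card_pos_iff.1 (Nat.zero_lt_of_lt hG.1)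
  obtain ⟨l, hl⟩ := exists_isLongestPath G
  obtain ⟨c, hc⟩ := hl.exists_notMem hnt
  let C := G.componentComplMk (K := {x | x ∈ l}) hc
  have hcC : c ∈ C := G.componentComplMk_mem hc
  obtain ⟨T, hTcard, hT⟩ := exists_card_eq_add_one_forall_isSegmentStart hl.nodup hl.ne_nil
    (fun x => IsLongestPath.mem_of_mem_vertexBoundary)
    (hl.getLast_notMem_vertexBoundary C hl.ne_nil)
  obtain ⟨w, hw⟩ := card_pos.1 (Nat.lt_of_lt_of_eq (Nat.succ_pos _) hTcard.symm)
  have hcard := hG.le_card_vertexBoundary C.nonempty (fun h => C.notMem_of_mem h (hT w hw).mem)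
    (hl.notMem_vertexBoundary_of_isSegmentStart C (hT w hw))
  have hcT : c ∉ T := fun h => hc (hT c h).mem
  obtain ⟨I, hI, hIcard⟩ := exists_subset_card_eq (s := insert c T) (n := k + 2)
    (by rw [card_insert_of_notMem hcT]; omega)
  refine ⟨I, hIcard, Set.Pairwise.mono (fun x hx => ?_) (hl.isIndepSet_insert C hcC)⟩
  exact (mem_insert.1 (hI hx)).imp_right (hT x)

end KConnected

theorem exists_three_le_degree_of_not_isTraceable {V : Type*} [Fintype V] [DecidableEq V]
    {G : SimpleGraph V} [DecidableRel G.Adj] (hG : G.Connected) (hnt : ¬ IsTraceable G) :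
    ∃ v, 3 ≤ G.degree v := by
  have := hG.nonempty
  obtain ⟨l, hl⟩ := exists_isLongestPath G
  obtain ⟨c, hc⟩ := hl.exists_notMem hnt
  let C := G.componentComplMk (K := {x | x ∈ l}) hc
  obtain ⟨⟨a, x⟩, haC, hxl, hadj⟩ := C.exists_adj_boundary_pair hG.preconnected
    ⟨_, List.head_mem hl.ne_nil⟩
  have hx : x ∈ vertexBoundary G C :=
    mem_vertexBoundary.2 ⟨fun hxC => C.notMem_of_mem hxC hxl, a, haC, hadj⟩
  obtain ⟨A, u, v, B, rfl⟩ := hl.exists_eq_append_of_mem_vertexBoundary C hx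
  obtain ⟨-, ⟨hux, hxv, -⟩, -⟩ : _ ∧ (G.Adj u x ∧ G.Adj x v ∧ _) ∧ _ := by
    simpa only [List.isChain_append, List.isChain_cons_cons] using hl.isChain
  have ha : a ∉ A ++ u :: x :: v :: B := C.notMem_of_mem haC
  have hau : a ≠ u := ne_of_mem_of_not_mem (by simp) ha |>.symm
  have hav : a ≠ v := ne_of_mem_of_not_mem (by simp) ha |>.symm
  have huv : u ≠ v := by
    have hnodup := hl.nodup.of_append_right
    rintro rfl
    simp at hnodup
  have hcard : #{a, u, v} = 3 := card_eq_three.2 ⟨a, u, v, hau, hav, huv, rfl⟩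
  refine ⟨x, ?_⟩
  rw [← hcard, ← G.card_neighborFinset_eq_degree]
  refine card_le_card ?_
  simp only [insert_subset_iff, singleton_subset_iff, SimpleGraph.mem_neighborFinset]
  exact ⟨hadj.symm, hux.symm, hxv⟩

section DegreeSum

variable {V : Type*} [Fintype V] {G : SimpleGraph V} [DecidableRel G.Adj]
  {I : Finset V}

theorem sum_degree_eq_card_biUnion_incidenceFinset [DecidableEq V] (hI : G.IsIndepSet I) :
    ∑ x ∈ I, G.degree x = #(I.biUnion (G.incidenceFinset ·)) := by
  rw [card_biUnion]
  · simp only [SimpleGraph.card_incidenceFinset_eq_degree]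
  intro x hx y hy hne
  rw [Function.onFun, ← disjoint_coe, SimpleGraph.coe_incidenceFinset,
    SimpleGraph.coe_incidenceFinset, Set.disjoint_iff_inter_eq_empty]
  exact G.incidenceSet_inter_incidenceSet_of_not_adj (hI hx hy hne) hne

theorem biUnion_incidenceFinset_subset [DecidableEq V] :
    I.biUnion (G.incidenceFinset ·) ⊆ G.edgeFinset :=
  biUnion_subset.2 fun x _ => G.incidenceFinset_subset x

theorem sum_degree_le_card_edgeFinset (hI : G.IsIndepSet I) :
    ∑ x ∈ I, G.degree x ≤ #G.edgeFinset := by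
  classical
  exact sum_degree_eq_card_biUnion_incidenceFinset hI ▸ card_le_card biUnion_incidenceFinset_subset

variable [DecidableEq V]

theorem isBipartiteWith_of_sum_degree_eq (hI : G.IsIndepSet I)
    (hsum : ∑ x ∈ I, G.degree x = #G.edgeFinset) : G.IsBipartiteWith I (Iᶜ : Finset V) where
  disjoint := by simpa using disjoint_compl_right
  mem_of_adj v w hvw := by
    have hcover : I.biUnion (G.incidenceFinset ·) = G.edgeFinset :=
      eq_of_subset_of_card_le biUnion_incidenceFinset_subset
        (sum_degree_eq_card_biUnion_incidenceFinset hI ▸ hsum.ge)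
    have hmem : s(v, w) ∈ I.biUnion (G.incidenceFinset ·) := hcover ▸ G.mem_edgeFinset.2 hvw
    obtain ⟨x, hxI, hx⟩ := mem_biUnion.1 hmem
    have hnot : ¬ (v ∈ I ∧ w ∈ I) := fun h => hI h.1 h.2 hvw.ne hvw
    rw [SimpleGraph.mem_incidenceFinset, SimpleGraph.mk'_mem_incidenceSet_iff] at hx
    simp only [mem_coe, mem_compl]
    grind

theorem neighborFinset_subset_compl (hI : G.IsIndepSet I) {x : V} (hx : x ∈ I) :
    G.neighborFinset x ⊆ Iᶜ := fun y hy => by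
  rw [SimpleGraph.mem_neighborFinset] at hy
  exact mem_compl.2 fun hyI => hI hx hyI hy.ne hy

theorem degree_le_card_compl (hI : G.IsIndepSet I) {x : V} (hx : x ∈ I) : G.degree x ≤ #Iᶜ :=
  card_le_card (neighborFinset_subset_compl hI hx)

theorem isCompleteBetween_of_degree_eq (hI : G.IsIndepSet I) (hdeg : ∀ x ∈ I, G.degree x = #Iᶜ) :
    G.IsCompleteBetween I (Iᶜ : Finset V) := by
  intro x hx y hy
  rw [← G.mem_neighborFinset,
    eq_of_subset_of_card_le (neighborFinset_subset_compl hI hx) (hdeg x hx).ge]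
  exact hy

end DegreeSum

section PolyaSzego

variable {ι R : Type*} [CommRing R] {s : Finset ι} {d : ι → R} {a b E : R}

theorem sum_sub_mul_sub_eq :
    ∑ i ∈ s, (d i - a) * (b - d i) = (a + b) * ∑ i ∈ s, d i - ∑ i ∈ s, d i ^ 2 - #s * (a * b) := by
  rw [mul_sum, ← nsmul_eq_mul, ← sum_const, ← sum_sub_distrib, ← sum_sub_distrib]
  exact sum_congr rfl fun i _ => by ring

variable [LinearOrder R] [IsStrictOrderedRing R]

theorem sum_sq_add_card_mul_le (hd : ∀ i ∈ s, d i ∈ Set.Icc a b) :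
    ∑ i ∈ s, d i ^ 2 + #s * (a * b) ≤ (a + b) * ∑ i ∈ s, d i := by
  have := sum_nonneg fun i hi => mul_nonneg (sub_nonneg.2 (hd i hi).1) (sub_nonneg.2 (hd i hi).2)
  rw [sum_sub_mul_sub_eq] at this
  linarith

theorem eq_or_eq_of_sum_sq_add_card_mul_eq (hd : ∀ i ∈ s, d i ∈ Set.Icc a b)
    (h : ∑ i ∈ s, d i ^ 2 + #s * (a * b) = (a + b) * ∑ i ∈ s, d i) {i : ι} (hi : i ∈ s) :
    d i = a ∨ d i = b := by
  have hzero : ∑ i ∈ s, (d i - a) * (b - d i) = 0 := by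
    rw [sum_sub_mul_sub_eq]
    linarith
  rw [sum_eq_zero_iff_of_nonneg fun i hi =>
    mul_nonneg (sub_nonneg.2 (hd i hi).1) (sub_nonneg.2 (hd i hi).2)] at hzero
  exact (mul_eq_zero.1 (hzero i hi)).imp sub_eq_zero.1 fun h => (sub_eq_zero.1 h).symm

theorem card_mul_sum_sq_le (ha : 0 ≤ a) (hb : 0 ≤ b) (hd : ∀ i ∈ s, d i ∈ Set.Icc a b)
    (hE : ∑ i ∈ s, d i ≤ E) :
    4 * (#s * (a * b)) * ∑ i ∈ s, d i ^ 2 ≤ (E * (a + b)) ^ 2 := by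
  have hQ : ∑ i ∈ s, d i ^ 2 ≤ E * (a + b) - #s * (a * b) := by
    have := sum_sq_add_card_mul_le hd
    have := mul_le_mul_of_nonneg_left hE (add_nonneg ha hb)
    linarith
  calc 4 * (#s * (a * b)) * ∑ i ∈ s, d i ^ 2
      ≤ 4 * (#s * (a * b)) * (E * (a + b) - #s * (a * b)) := by gcongr
    _ ≤ (E * (a + b)) ^ 2 := by linarith [sq_nonneg (E * (a + b) - 2 * (#s * (a * b)))]

theorem card_mul_sum_sq_rigidity (hs : s.Nonempty) (ha : 0 < a)
    (hd : ∀ i ∈ s, d i ∈ Set.Icc a b) (hE : ∑ i ∈ s, d i ≤ E)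
    (h : (E * (a + b)) ^ 2 ≤ 4 * (#s * (a * b)) * ∑ i ∈ s, d i ^ 2) :
    ∑ i ∈ s, d i = E ∧ E * (a + b) = 2 * (#s * (a * b)) ∧ ∀ i ∈ s, d i = a ∨ d i = b := by
  have hb : 0 < b := by
    obtain ⟨i, hi⟩ := hs
    exact ha.trans_le ((hd i hi).1.trans (hd i hi).2)
  have hY : 0 < #s * (a * b) := by
    have := hs.card_pos
    positivity
  have hQ := sum_sq_add_card_mul_le hd
  have hX := mul_le_mul_of_nonneg_left hE (add_pos ha hb).le
  have hZ : E * (a + b) = 2 * (#s * (a * b)) := by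
    have hle : 4 * (#s * (a * b)) * ∑ i ∈ s, d i ^ 2 ≤
        4 * (#s * (a * b)) * (E * (a + b) - #s * (a * b)) := by gcongr; linarith
    have hsq : (E * (a + b) - 2 * (#s * (a * b))) ^ 2 ≤ 0 := by linarith
    exact sub_eq_zero.1 (pow_eq_zero_iff two_ne_zero |>.1 (le_antisymm hsq (sq_nonneg _)))
  have hQY : #s * (a * b) ≤ ∑ i ∈ s, d i ^ 2 := by
    refine le_of_mul_le_mul_left (a := 4 * (#s * (a * b))) ?_ (by positivity)
    rw [hZ] at h
    linarith
  refine ⟨mul_left_cancel₀ (add_pos ha hb).ne' ?_, hZ, fun i hi => ?_⟩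
  · linarith
  · exact eq_or_eq_of_sum_sq_add_card_mul_eq hd (by linarith) hi

end PolyaSzego

section CompleteBipartite

variable {V : Type*} {G : SimpleGraph V}

theorem nonempty_iso_completeBipartiteGraph [Fintype V] [DecidableEq V] {s : Finset V} {m n : ℕ}
    (hs : #s = m) (hsc : #sᶜ = n) (hbip : G.IsBipartiteWith s (sᶜ : Finset V))
    (hcomplete : G.IsCompleteBetween s (sᶜ : Finset V)) :
    Nonempty (G ≃g completeBipartiteGraph (Fin m) (Fin n)) := by
  let es : {v // v ∈ s} ≃ Fin m := Fintype.equivFinOfCardEq (by simpa using hs)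
  let et : {v // v ∉ s} ≃ Fin n :=
    Fintype.equivFinOfCardEq
      (by rw [Fintype.card_subtype_compl, Fintype.card_coe, ← card_compl, hsc])
  let f := (Equiv.sumCongr es.symm et.symm).trans (Equiv.sumCompl (· ∈ s))
  have hl (i : Fin m) : f (.inl i) ∈ s := by simp [f]
  have hr (j : Fin n) : f (.inr j) ∈ sᶜ := by simpa [f] using (et.symm j).2
  refine ⟨(RelIso.mk f fun {x y} => ?_).symm⟩
  rcases x with i | i <;> rcases y with j | j
  · simpa using fun h => mem_compl.1 (hbip.mem_of_mem_adj (hl i) h) (hl j)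
  · simpa using hcomplete (hl i) (hr j)
  · simpa using (hcomplete (hl j) (hr i)).symm
  · simpa using fun h => mem_compl.1 (hr i) (hbip.mem_of_mem_adj' (hr j) h)

theorem exists_perm_isChain_of_isCompleteBetween : ∀ A B : List V,
    G.IsCompleteBetween {x | x ∈ A} {x | x ∈ B} → B.length ≤ A.length → A.length ≤ B.length + 1 →
    ∃ l : List V, l.Perm (A ++ B) ∧ l.IsChain G.Adj ∧ ∀ x ∈ l.head?, x ∈ A
  | [], B, _, hBA, _ => by
    obtain rfl : B = [] := List.eq_nil_of_length_eq_zero (Nat.le_zero.1 hBA)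
    exact ⟨[], by simp⟩
  | a :: A, B, h, hBA, hAB => by
    simp only [List.length_cons] at hBA hAB
    obtain ⟨l, hperm, hchain, hhead⟩ := exists_perm_isChain_of_isCompleteBetween B A
      (fun x hx y hy => (h (List.mem_cons_of_mem a hy) hx).symm) (by omega) (by omega)
    refine ⟨a :: l, (hperm.trans List.perm_append_comm).cons a, hchain.cons fun x hx => ?_, by simp⟩
    exact h List.mem_cons_self (hhead x hx)
termination_by A B => A.length + B.length

theorem isTraceable_of_isCompleteBetween [Fintype V] [DecidableEq V] [Nonempty V] {s : Finset V}
    (h : G.IsCompleteBetween s (sᶜ : Finset V)) (hle : #sᶜ ≤ #s) (hle' : #s ≤ #sᶜ + 1) :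
    IsTraceable G := by
  obtain ⟨l, hperm, hchain, -⟩ := exists_perm_isChain_of_isCompleteBetween s.toList sᶜ.toList
    (fun v hv w hw => h (mem_toList.1 hv) (mem_toList.1 hw))
    (by simpa only [length_toList] using hle) (by simpa only [length_toList] using hle')
  refine isTraceable_of_isChain hchain (hperm.nodup_iff.2 ?_) fun v => hperm.mem_iff.2 ?_
  · refine s.nodup_toList.append sᶜ.nodup_toList fun v hv hv' => ?_
    exact mem_compl.1 (mem_toList.1 hv') (mem_toList.1 hv)
  · simpa using em (v ∈ s)

end CompleteBipartite

section Zagreb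

variable {V : Type*} [Fintype V] [DecidableEq V] {G : SimpleGraph V} [DecidableRel G.Adj]
  {I : Finset V}

theorem zagreb_rigidity (hI : G.IsIndepSet I) (hne : I.Nonempty) (hδ : 0 < G.minDegree)
    (hM : (#Iᶜ * G.maxDegree ^ 2 + (#G.edgeFinset * (G.minDegree + #Iᶜ)) ^ 2 /
      (4 * (#I * (G.minDegree * #Iᶜ))) : ℝ) ≤ ∑ v, (G.degree v : ℝ) ^ 2) :
    (∀ v ∈ Iᶜ, G.degree v = G.maxDegree) ∧ ∑ v ∈ I, G.degree v = #G.edgeFinset ∧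
      #G.edgeFinset * (G.minDegree + #Iᶜ) = 2 * (#I * (G.minDegree * #Iᶜ)) ∧
      ∀ v ∈ I, G.degree v = G.minDegree ∨ G.degree v = #Iᶜ := by
  have hcompl : 0 < #Iᶜ := by
    obtain ⟨x, hx⟩ := hne
    exact hδ.trans_le ((G.minDegree_le_degree x).trans (degree_le_card_compl hI hx))
  have hdeg : ∀ v ∈ I, (G.degree v : ℝ) ∈ Set.Icc (G.minDegree : ℝ) #Iᶜ := fun v hv =>
    ⟨mod_cast G.minDegree_le_degree v, mod_cast degree_le_card_compl hI hv⟩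
  have hsum : ∑ v ∈ I, (G.degree v : ℝ) ≤ #G.edgeFinset := mod_cast sum_degree_le_card_edgeFinset hI
  have hY : (0 : ℝ) < 4 * (#I * (G.minDegree * #Iᶜ)) := by
    have := hne.card_pos
    positivity
  have hmax : ∀ v ∈ Iᶜ, (G.degree v : ℝ) ^ 2 ≤ G.maxDegree ^ 2 := fun v _ => by
    gcongr
    exact G.degree_le_maxDegree v
  have hconst : ∑ _v ∈ Iᶜ, (G.maxDegree : ℝ) ^ 2 = #Iᶜ * G.maxDegree ^ 2 := by
    rw [sum_const, nsmul_eq_mul]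
  have hsum_compl : ∑ v ∈ Iᶜ, (G.degree v : ℝ) ^ 2 ≤ #Iᶜ * G.maxDegree ^ 2 :=
    hconst ▸ sum_le_sum hmax
  have hsum_indep : ∑ v ∈ I, (G.degree v : ℝ) ^ 2 ≤
      (#G.edgeFinset * (G.minDegree + #Iᶜ)) ^ 2 / (4 * (#I * (G.minDegree * #Iᶜ))) :=
    (le_div_iff₀' hY).2
      (card_mul_sum_sq_le (Nat.cast_nonneg _) (Nat.cast_nonneg _) hdeg hsum)
  rw [← sum_add_sum_compl I] at hM
  obtain ⟨hsum_eq, hedge, hdeg_eq⟩ := card_mul_sum_sq_rigidity hne (Nat.cast_pos.2 hδ)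
    hdeg hsum ((div_le_iff₀' hY).1 (by linarith))
  refine ⟨fun v hv => ?_, mod_cast hsum_eq, mod_cast hedge, mod_cast hdeg_eq⟩
  have := (sum_eq_sum_iff_of_le hmax).1 (by linarith) v hv
  exact Nat.pow_left_injective two_ne_zero (mod_cast this)

theorem add_mul_ne_two_mul_mul {k δ m Δ : ℕ} (hk : k ≤ δ) (hδm : δ < m) (hmΔ : m ≤ Δ)
    (hΔk : Δ ≤ k + 2) (hΔ : 3 ≤ Δ) : (δ + m) * Δ ≠ 2 * ((k + 2) * δ) := by
  obtain rfl | rfl : δ = k ∨ δ = k + 1 := by omega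
  · obtain ⟨rfl, rfl⟩ | rfl : (m = δ + 1 ∧ Δ = δ + 1) ∨ Δ = δ + 2 := by omega
    · intro h
      nlinarith
    · intro h
      nlinarith
  · obtain rfl : m = k + 2 := by omega
    obtain rfl : Δ = k + 2 := by omega
    intro h
    nlinarith

theorem minDegree_eq_card_compl {k : ℕ} (hcard : #I = k + 2) (hk : k ≤ G.minDegree)
    (hδ : 0 < G.minDegree) (hΔ : 3 ≤ G.maxDegree) (hbip : G.IsBipartiteWith I (Iᶜ : Finset V))
    (hmax : ∀ v ∈ Iᶜ, G.degree v = G.maxDegree)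
    (hedge : #G.edgeFinset * (G.minDegree + #Iᶜ) = 2 * (#I * (G.minDegree * #Iᶜ)))
    (hdeg : ∀ v ∈ I, G.degree v = G.minDegree ∨ G.degree v = #Iᶜ) :
    G.minDegree = #Iᶜ := by
  by_contra hne
  obtain ⟨x, hx⟩ : I.Nonempty := card_pos.1 (by omega)
  have hlt : G.minDegree < #Iᶜ := lt_of_le_of_ne ((G.minDegree_le_degree x).trans
    (SimpleGraph.isBipartiteWith_degree_le hbip hx)) hne
  obtain ⟨y, hy⟩ : Iᶜ.Nonempty := card_pos.1 (hδ.trans hlt)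
  have hΔk : G.maxDegree ≤ k + 2 :=
    hcard ▸ hmax y hy ▸ SimpleGraph.isBipartiteWith_degree_le' hbip hy
  have hcount : #G.edgeFinset = #Iᶜ * G.maxDegree :=
    (SimpleGraph.isBipartiteWith_sum_degrees_eq_card_edges' hbip).symm.trans (sum_const_nat hmax)
  have hmean : (G.minDegree + #Iᶜ) * G.maxDegree = 2 * ((k + 2) * G.minDegree) := by
    refine Nat.eq_of_mul_eq_mul_left (hδ.trans hlt) ?_
    rw [hcount, hcard] at hedge
    linarith
  by_cases hfull : ∃ v ∈ I, G.degree v = #Iᶜ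
  · obtain ⟨v, -, hv⟩ := hfull
    exact add_mul_ne_two_mul_mul hk hlt (hv ▸ G.degree_le_maxDegree v) hΔk hΔ hmean
  · push Not at hfull
    have hcount' : #G.edgeFinset = #I * G.minDegree :=
      (SimpleGraph.isBipartiteWith_sum_degrees_eq_card_edges hbip).symm.trans
        (sum_const_nat fun v hv => (hdeg v hv).resolve_right (hfull v hv))
    refine hne (Nat.eq_of_mul_eq_mul_right (by omega : 0 < G.maxDegree) ?_)
    rw [hcount, hcard] at hcount'
    linarith

theorem exists_isBipartiteWith_isCompleteBetween {k : ℕ} (hk : 1 ≤ k) (hG : KConnected k G)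
    (hnt : ¬ IsTraceable G)
    (hM : (((Fintype.card V : ℝ) - k - 2) * G.maxDegree ^ 2 +
      (#G.edgeFinset * ((G.minDegree : ℝ) + Fintype.card V - k - 2)) ^ 2 /
        (4 * G.minDegree * ((Fintype.card V : ℝ) - k - 2) * (k + 2))) ≤
      ((∑ v, G.degree v ^ 2 : ℕ) : ℝ)) :
    ∃ I : Finset V, #I = k + 2 ∧ k ≤ #Iᶜ ∧ #Iᶜ ≤ k + 2 ∧
      G.IsBipartiteWith I (Iᶜ : Finset V) ∧ G.IsCompleteBetween I (Iᶜ : Finset V) := by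
  obtain ⟨I, hcard, hI⟩ := hG.exists_isIndepSet_of_not_isTraceable hnt
  have hne : I.Nonempty := card_pos.1 (by omega)
  have := (hG.connected hk).nonempty
  have hkδ : k ≤ G.minDegree := G.le_minDegree_of_forall_le_degree k hG.le_degree
  have hcompl : (Fintype.card V : ℝ) = #Iᶜ + k + 2 := by
    rw [← card_add_card_compl I, hcard]
    push_cast
    ring
  obtain ⟨hmax, hsum, hedge, hdeg⟩ := zagreb_rigidity hI hne (hk.trans hkδ) (by
    rw [hcompl] at hM
    push_cast at hM
    rw [hcard]
    push_cast
    convert hM using 3 <;> ring)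
  have hbip := isBipartiteWith_of_sum_degree_eq hI hsum
  obtain ⟨w, hw⟩ := exists_three_le_degree_of_not_isTraceable (hG.connected hk) hnt
  have hδ := minDegree_eq_card_compl hcard hkδ (hk.trans hkδ) (hw.trans (G.degree_le_maxDegree w))
    hbip hmax hedge hdeg
  obtain ⟨y, hy⟩ : Iᶜ.Nonempty := card_pos.1 (by omega)
  refine ⟨I, hcard, hδ ▸ hkδ, ?_, hbip, isCompleteBetween_of_degree_eq hI fun v hv => ?_⟩
  · rw [← hδ, ← hcard]
    exact (G.minDegree_le_degree y).trans (SimpleGraph.isBipartiteWith_degree_le' hbip hy)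
  · simpa only [hδ, or_self] using hdeg v hv

end Zagreb

theorem zagreb_traceable_general {V : Type*} [Fintype V] [DecidableEq V]
    (G : SimpleGraph V) [DecidableRel G.Adj]
    (k n e δ Δ : ℕ) (hk : 1 ≤ k) (hconn : KConnected k G)
    (hn : n = Fintype.card V) (he : e = G.edgeFinset.card)
    (hδ : δ = G.minDegree) (hΔ : Δ = G.maxDegree)
    (hM : ((∑ v, (G.degree v) ^ 2 : ℕ) : ℝ) ≥
      ((n : ℝ) - k - 2) * Δ ^ 2 +
        ((e : ℝ) * ((δ : ℝ) + n - k - 2)) ^ 2 / (4 * δ * ((n : ℝ) - k - 2) * (k + 2))) :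
    IsTraceable G ∨ Nonempty (G ≃g completeBipartiteGraph (Fin k) (Fin (k + 2))) := by
  subst hn he hδ hΔ
  by_cases ht : IsTraceable G
  · exact .inl ht
  obtain ⟨I, hcard, hle, hge, hbip, hcomplete⟩ :=
    exists_isBipartiteWith_isCompleteBetween hk hconn ht hM
  obtain hIc | hlt := hle.eq_or_lt
  · refine .inr (nonempty_iso_completeBipartiteGraph hIc.symm ?_ ?_ ?_)
    · rwa [compl_compl]
    · rw [compl_compl]
      exact hbip.symm
    · rw [compl_compl]
      exact hcomplete.symm
  · have := (hconn.connected hk).nonempty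
    exact .inl (isTraceable_of_isCompleteBetween hcomplete (by omega) (by omega))

theorem zagreb_traceable
    {V : Type*} [Fintype V] [DecidableEq V] [Nonempty V]
    (G : SimpleGraph V) [DecidableRel G.Adj]
    (k n e δ Δ : ℕ) (hk : 1 ≤ k) (hconn : KConnected k G)
    (hn : n = Fintype.card V) (hn9 : 9 ≤ n) (he : e = G.edgeFinset.card)
    (hδ : δ = G.minDegree) (hΔ : Δ = G.maxDegree)
    (hM : ((∑ v, (G.degree v) ^ 2 : ℕ) : ℝ) ≥
      ((n : ℝ) - k - 2) * Δ ^ 2 +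
        ((e : ℝ) * ((δ : ℝ) + n - k - 2)) ^ 2 / (4 * δ * ((n : ℝ) - k - 2) * (k + 2))) :
    IsTraceable G ∨ Nonempty (G ≃g completeBipartiteGraph (Fin k) (Fin (k + 2))) :=
  zagreb_traceable_general G k n e δ Δ hk hconn hn he hδ hΔ hM
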